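/- For Brauerian split equivalences R : m ⊢ n and P : n ⊢ k, and for u ∈ m, v ∈ k, the pair (u_s, v_t) belongs to P ∗ R if and only if there exists a finite alternating path w_0, w_1, ..., w_{2j+1} of elements of the middle ordinal n (possibly empty, j = -1 meaning directly) connecting u to v, i.e. either (u_s, v_t) arises from {u_s, w_t} ∈ R-classes and {w_s, v_t} ∈ P-classes chained through elements of n. Formally: (u_s, v_t) ∈ P ∗ R iff there exist n_0, ..., n_{2j+1} ∈ n with (u_s, (n_0)_t) ∈ R, ((n_{2i})_s, (n_{2i+1})_t) ∈ P-induced pairing alternately, ..., ((n_{2j+1})_s, v_t) ∈ P, where consecutive connections alternate between R (as caps/transversals on its target side) and P (as cups/transversals on its source side). -/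

import Mathlib

open Sum

/-- Embed the first split relation's carrier into the three-part disjoint union. -/
def embR {α β γ : Type} : α ⊕ β → α ⊕ (β ⊕ γ)
  | inl a => inl a
  | inr b => inr (inl b)

/-- Embed the second split relation's carrier into the three-part disjoint union. -/
def embP {α β γ : Type} : β ⊕ γ → α ⊕ (β ⊕ γ)
  | inl b => inr (inl b)
  | inr c => inr (inr c)

/-- Embed the composite's carrier into the three-part disjoint union. -/
def embO {α β γ : Type} : α ⊕ γ → α ⊕ (β ⊕ γ)
  | inl a => inl a
  | inr c => inr (inr c)

/-- The union R^{-t} ∪ P^{-s} viewed inside the disjoint union of all three parts. -/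
def unionRel {α β γ : Type} (R : α ⊕ β → α ⊕ β → Prop) (P : β ⊕ γ → β ⊕ γ → Prop)
    (x y : α ⊕ (β ⊕ γ)) : Prop :=
  (∃ u v, embR (γ := γ) u = x ∧ embR (γ := γ) v = y ∧ R u v) ∨
  (∃ u v, embP (α := α) u = x ∧ embP (α := α) v = y ∧ P u v)

/-- The composite P ∗ R = Tr(R^{-t} ∪ P^{-s}) ∩ (X^s ∪ Z^t)². -/
def splitComp {α β γ : Type} (R : α ⊕ β → α ⊕ β → Prop) (P : β ⊕ γ → β ⊕ γ → Prop)
    (x y : α ⊕ γ) : Prop :=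
  Relation.TransGen (unionRel R P) (embO (β := β) x) (embO (β := β) y)

/-- A Brauerian split equivalence: an equivalence relation all of whose classes
are two-element sets (every element has a unique partner distinct from itself). -/
def IsBrauerian {σ : Type} (R : σ → σ → Prop) : Prop :=
  Equivalence R ∧ ∀ u, ∃ v, v ≠ u ∧ R u v ∧ ∀ w, R u w → w = u ∨ w = v

/-- The identity Brauerian split equivalence 1ₙ, with classes {kₛ, kₜ} for k < n. -/
def idBr (n : ℕ) (x y : Fin n ⊕ Fin n) : Prop :=
  Sum.elim Fin.val Fin.val x = Sum.elim Fin.val Fin.val y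

/-- A two-element class {u, v} is a transversal: one source, one target element. -/
def IsTransversal {α β : Type} (u v : α ⊕ β) : Prop :=
  ∃ a b, (u = inl a ∧ v = inr b) ∨ (u = inr b ∧ v = inl a)

/-- A two-element class {u, v} is a cup: both elements on the source side. -/
def IsCup {α β : Type} (u v : α ⊕ β) : Prop :=
  ∃ a a', u = inl a ∧ v = inl a'

/-- A two-element class {u, v} is a cap: both elements on the target side. -/
def IsCap {α β : Type} (u v : α ⊕ β) : Prop :=
  ∃ b b', u = inr b ∧ v = inr b'

/-!
A walk along `R` and `P` starting at `u` ends at a point `R`-related to `u` itself, or `R`- or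
`P`-related to a middle element reached from `u` by a zigzag. Transitivity absorbs repeated steps of
the same relation, while reflexivity inserts the trivial steps that make the two relations strictly
alternate.
-/

open Relation

section AlternatingPath

variable {β : Type*} {p q : β → β → Prop} {a b : β}

theorem reflTransGen_comp_of_path {j : ℕ} (w : Fin (2 * j + 1) → β)
    (hp : ∀ i : Fin j, p (w ⟨2 * i, by lia⟩) (w ⟨2 * i + 1, by lia⟩))
    (hq : ∀ i : Fin j, q (w ⟨2 * i + 1, by lia⟩) (w ⟨2 * i + 2, by lia⟩)) :
    ReflTransGen (Comp p q) (w ⟨0, by lia⟩) (w ⟨2 * j, by lia⟩) := by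
  induction j with
  | zero => exact .refl
  | succ j ih =>
    exact (ih (fun i ↦ w (i.castLE (by lia))) (fun i ↦ hp i.castSucc)
      (fun i ↦ hq i.castSucc)).tail ⟨_, hp (Fin.last j), hq (Fin.last j)⟩

theorem exists_path_of_reflTransGen_comp (h : ReflTransGen (Comp p q) a b) :
    ∃ (j : ℕ) (w : Fin (2 * j + 1) → β), w ⟨0, by lia⟩ = a ∧
      (∀ i : Fin j, p (w ⟨2 * i, by lia⟩) (w ⟨2 * i + 1, by lia⟩)) ∧
      (∀ i : Fin j, q (w ⟨2 * i + 1, by lia⟩) (w ⟨2 * i + 2, by lia⟩)) ∧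
      w ⟨2 * j, by lia⟩ = b := by
  induction h using ReflTransGen.head_induction_on with
  | refl => exact ⟨0, fun _ ↦ b, rfl, nofun, nofun, rfl⟩
  | @head a c hac _ ih =>
    obtain ⟨d, had, hdc⟩ := hac
    obtain ⟨j, w, rfl, hp, hq, hb⟩ := ih
    exact ⟨j + 1, Fin.cons a (Fin.cons d w), rfl, Fin.cases had hp, Fin.cases hdc hq, hb⟩

end AlternatingPath

section Zigzag

variable {α β γ : Type} {R : α ⊕ β → α ⊕ β → Prop} {P : β ⊕ γ → β ⊕ γ → Prop} {u : α}

/-- One period of a zigzag through the middle part: a step of `P` between source elements followed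
by a step of `R` between target elements. The two steps may be trivial. -/
def ZigzagStep (R : α ⊕ β → α ⊕ β → Prop) (P : β ⊕ γ → β ⊕ γ → Prop) : β → β → Prop :=
  Comp (fun b b' ↦ P (inl b) (inl b')) (fun b b' ↦ R (inr b) (inr b'))

/-- The middle elements at which a zigzag from the source element `u` can arrive after a step of
`R`. -/
def ZigzagTo (R : α ⊕ β → α ⊕ β → Prop) (P : β ⊕ γ → β ⊕ γ → Prop) (u : α) : β → Prop :=
  Comp (fun u b ↦ R (inl u) (inr b)) (ReflTransGen (ZigzagStep R P)) u

namespace ZigzagTo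

variable {b b' : β}

theorem trans_inr [Std.Refl P] (h : ZigzagTo R P u b) (hR : R (inr b) (inr b')) :
    ZigzagTo R P u b' :=
  let ⟨b₀, hb₀, hb⟩ := h
  ⟨b₀, hb₀, hb.tail ⟨b, refl_of P _, hR⟩⟩

theorem trans_inl [Std.Refl R] (h : ZigzagTo R P u b) (hP : P (inl b) (inl b')) :
    ZigzagTo R P u b' :=
  let ⟨b₀, hb₀, hb⟩ := h
  ⟨b₀, hb₀, hb.tail ⟨b', hP, refl_of R _⟩⟩

theorem transGen_unionRel (h : ZigzagTo R P u b) :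
    TransGen (unionRel R P) (inl u) (inr (inl b)) := by
  obtain ⟨b₀, hb₀, hb⟩ := h
  have start : unionRel R P (inl u) (inr (inl b₀)) := .inl ⟨_, _, rfl, rfl, hb₀⟩
  refine .trans_left (.single start) (hb.lift' (inr ∘ inl) ?_)
  rintro c c' ⟨d, hcd, hdc'⟩
  exact .tail (.single (.inr ⟨_, _, rfl, rfl, hcd⟩)) (.inl ⟨_, _, rfl, rfl, hdc'⟩)

end ZigzagTo

/-- The invariant of walks along `unionRel R P` starting at `u`: the elements `R`-related to `u`, or
`R`- or `P`-related to a middle element reached by a zigzag from `u`. It is defined by cases on the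
three parts, as middle elements allow both descriptions `zigzagReachable_embR` and
`zigzagReachable_embP`. -/
def ZigzagReachable (R : α ⊕ β → α ⊕ β → Prop) (P : β ⊕ γ → β ⊕ γ → Prop) (u : α) :
    α ⊕ (β ⊕ γ) → Prop
  | inl a => R (inl u) (inl a) ∨ ∃ b, ZigzagTo R P u b ∧ R (inr b) (inl a)
  | inr (inl b) => ZigzagTo R P u b
  | inr (inr c) => ∃ b, ZigzagTo R P u b ∧ P (inl b) (inr c)

theorem zigzagReachable_embR [Std.Refl R] [Std.Refl P] {x : α ⊕ β} :
    ZigzagReachable R P u (embR x) ↔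
      R (inl u) x ∨ ∃ b, ZigzagTo R P u b ∧ R (inr b) x := by
  rcases x with a | b
  · rfl
  · refine ⟨fun h ↦ .inr ⟨b, h, refl_of R _⟩, ?_⟩
    rintro (h | ⟨b', hb', h⟩)
    · exact ⟨b, h, .refl⟩
    · exact hb'.trans_inr h

theorem zigzagReachable_embP [Std.Refl R] [Std.Refl P] {x : β ⊕ γ} :
    ZigzagReachable R P u (embP x) ↔ ∃ b, ZigzagTo R P u b ∧ P (inl b) x := by
  rcases x with b | c
  · exact ⟨fun h ↦ ⟨b, h, refl_of P _⟩, fun ⟨_, hb', h⟩ ↦ hb'.trans_inl h⟩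
  · rfl

variable [Std.Refl R] [IsTrans _ R] [Std.Refl P] [IsTrans _ P]

theorem ZigzagReachable.trans_unionRel {x y : α ⊕ (β ⊕ γ)} (hx : ZigzagReachable R P u x)
    (h : unionRel R P x y) : ZigzagReachable R P u y := by
  rcases h with ⟨x, y, rfl, rfl, h⟩ | ⟨x, y, rfl, rfl, h⟩
  · rw [zigzagReachable_embR] at hx ⊢
    exact hx.imp (trans_of R · h) fun ⟨b, hb, hbx⟩ ↦ ⟨b, hb, trans_of R hbx h⟩
  · rw [zigzagReachable_embP] at hx ⊢
    exact hx.imp fun b ⟨hb, hbx⟩ ↦ ⟨hb, trans_of P hbx h⟩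

theorem ZigzagReachable.of_reflTransGen_unionRel {y : α ⊕ (β ⊕ γ)}
    (h : ReflTransGen (unionRel R P) (inl u) y) : ZigzagReachable R P u y := by
  induction h with
  | refl => exact .inl (refl_of R _)
  | tail _ hstep ih => exact ih.trans_unionRel hstep

theorem splitComp_inl_inr_iff_exists_zigzagTo {v : γ} :
    splitComp R P (inl u) (inr v) ↔ ∃ b, ZigzagTo R P u b ∧ P (inl b) (inr v) :=
  ⟨fun h ↦ ZigzagReachable.of_reflTransGen_unionRel h.to_reflTransGen,
    fun ⟨_, hb, hv⟩ ↦ hb.transGen_unionRel.tail (.inr ⟨_, _, rfl, rfl, hv⟩)⟩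

end Zigzag

theorem splitComp_zigzag_general {α β γ : Type}
    (R : α ⊕ β → α ⊕ β → Prop) (P : β ⊕ γ → β ⊕ γ → Prop)
    [Std.Refl R] [IsTrans _ R] [Std.Refl P] [IsTrans _ P] (u : α) (v : γ) :
    splitComp R P (inl u) (inr v) ↔
      ∃ (j : ℕ) (w : Fin (2 * j + 1) → β),
        R (inl u) (inr (w ⟨0, by lia⟩)) ∧
        (∀ i : Fin j, P (inl (w ⟨2 * i, by lia⟩)) (inl (w ⟨2 * i + 1, by lia⟩))) ∧
        (∀ i : Fin j, R (inr (w ⟨2 * i + 1, by lia⟩)) (inr (w ⟨2 * i + 2, by lia⟩))) ∧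
        P (inl (w ⟨2 * j, by lia⟩)) (inr v) := by
  rw [splitComp_inl_inr_iff_exists_zigzagTo]
  constructor
  · rintro ⟨b, ⟨b₀, hu, hzigzag⟩, hv⟩
    obtain ⟨j, w, rfl, hP, hR, rfl⟩ := exists_path_of_reflTransGen_comp hzigzag
    exact ⟨j, w, hu, hP, hR, hv⟩
  · rintro ⟨j, w, hu, hP, hR, hv⟩
    exact ⟨_, ⟨_, hu, reflTransGen_comp_of_path w hP hR⟩, hv⟩

/-- (uₛ, vₜ) belongs to the composite P ∗ R iff u and v are joined
by a finite zigzag path through the middle ordinal n, alternating between a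
transversal of R, cups of P and caps of R, and ending with a transversal of P. -/
theorem splitComp_zigzag {m n k : ℕ}
    (R : Fin m ⊕ Fin n → Fin m ⊕ Fin n → Prop)
    (P : Fin n ⊕ Fin k → Fin n ⊕ Fin k → Prop)
    (hR : IsBrauerian R) (hP : IsBrauerian P) (u : Fin m) (v : Fin k) :
    splitComp R P (inl u) (inr v) ↔
      ∃ (j : ℕ) (w : Fin (2 * j + 1) → Fin n),
        R (inl u) (inr (w ⟨0, by omega⟩)) ∧
        (∀ i : Fin j, P (inl (w ⟨2 * i.val, by have := i.isLt; omega⟩))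
                        (inl (w ⟨2 * i.val + 1, by have := i.isLt; omega⟩))) ∧
        (∀ i : Fin j, R (inr (w ⟨2 * i.val + 1, by have := i.isLt; omega⟩))
                        (inr (w ⟨2 * i.val + 2, by have := i.isLt; omega⟩))) ∧
        P (inl (w ⟨2 * j, by omega⟩)) (inr v) :=
  have := hR.1.isEquiv
  have := hP.1.isEquiv
  splitComp_zigzag_general R P u v
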